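/- Let (X,Y) be a coherent pair of random variables with E X = E Y = p. Then for all Borel sets B, C ⊆ [0,1], E[X · 1(X ∈ B)] + E[Y · 1(Y ∈ C)] ≤ p + P(X ∈ B, Y ∈ C). -/

import Mathlib

/-!
Let `A` be the event witnessing coherence, and put `S = {X ∈ B}`, `T = {Y ∈ C}`. Since
`S ∈ σ(X)`, the defining property of conditional expectation gives `E[X; S] = P(A ∩ S)`
(`setIntegral_eq_measureReal_inter`), and likewise `E[Y; T] = P(A ∩ T)` and `p = P(A)`.
The claim becomes `P(A ∩ S) + P(A ∩ T) ≤ P(A) + P(S ∩ T)`, which follows from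
inclusion–exclusion inside `A`.
-/

open MeasureTheory

/-- A pair of random variables `(X, Y)` on a probability space, each with values in `[0,1]`,
is *coherent* if there is an event `A` such that `X` is a version of the conditional
probability of `A` given `σ(X)` and `Y` is a version of the conditional probability of `A`
given `σ(Y)`. -/
def IsCoherent {Ω : Type*} [MeasurableSpace Ω] (μ : Measure Ω) (X Y : Ω → ℝ) : Prop :=
  Measurable X ∧ Measurable Y ∧
  (∀ ω, X ω ∈ Set.Icc (0:ℝ) 1) ∧ (∀ ω, Y ω ∈ Set.Icc (0:ℝ) 1) ∧
  ∃ A : Set Ω, MeasurableSet A ∧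
    X =ᵐ[μ] μ[A.indicator (fun _ => (1:ℝ)) | MeasurableSpace.comap X inferInstance] ∧
    Y =ᵐ[μ] μ[A.indicator (fun _ => (1:ℝ)) | MeasurableSpace.comap Y inferInstance]

/-- If `Z` is a version of the conditional probability of `A` given `σ(Z)`, then
`E[Z; Z ∈ B] = P(A ∩ {Z ∈ B})`. -/
lemma setIntegral_eq_measureReal_inter {Ω : Type*} [MeasurableSpace Ω] (μ : Measure Ω)
    [IsProbabilityMeasure μ] {Z : Ω → ℝ} (hZ : Measurable Z) {A : Set Ω} (hA : MeasurableSet A)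
    (h : Z =ᵐ[μ] μ[A.indicator (fun _ => (1:ℝ)) | MeasurableSpace.comap Z inferInstance])
    {B : Set ℝ} (hB : MeasurableSet B) :
    ∫ ω in {ω | Z ω ∈ B}, Z ω ∂μ = μ.real (A ∩ {ω | Z ω ∈ B}) := by
  have hint : Integrable (A.indicator (fun _ => (1:ℝ))) μ :=
    (integrable_const (1:ℝ)).indicator hA
  have hS : MeasurableSet[MeasurableSpace.comap Z inferInstance] {ω | Z ω ∈ B} := ⟨B, hB, rfl⟩
  rw [integral_congr_ae (ae_restrict_of_ae h),
    setIntegral_condExp hZ.comap_le hint hS, integral_indicator hA]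
  simp [Measure.real, Measure.restrict_apply hA]

theorem stmt_19 {Ω : Type*} [MeasurableSpace Ω] (μ : Measure Ω) [IsProbabilityMeasure μ]
    (X Y : Ω → ℝ) (hXY : IsCoherent μ X Y) (p : ℝ)
    (hmX : ∫ ω, X ω ∂μ = p) (hmY : ∫ ω, Y ω ∂μ = p)
    (B C : Set ℝ) (hB : MeasurableSet B) (hC : MeasurableSet C) :
    (∫ ω in {ω | X ω ∈ B}, X ω ∂μ) + (∫ ω in {ω | Y ω ∈ C}, Y ω ∂μ) ≤
      p + (μ {ω | X ω ∈ B ∧ Y ω ∈ C}).toReal := by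
  obtain ⟨hX, hY, -, -, A, hA, hAX, hAY⟩ := hXY
  have hp : p = μ.real A := by
    have := setIntegral_eq_measureReal_inter μ hX hA hAX MeasurableSet.univ
    simpa [hmX] using this
  rw [setIntegral_eq_measureReal_inter μ hX hA hAX hB,
    setIntegral_eq_measureReal_inter μ hY hA hAY hC, hp]
  have hT : MeasurableSet (A ∩ {ω | Y ω ∈ C}) := hA.inter (hY hC)
  rw [← measureReal_union_add_inter hT]
  refine add_le_add (measureReal_mono ?_) (measureReal_mono ?_)
  · exact Set.union_subset Set.inter_subset_left Set.inter_subset_left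
  · exact fun ω hω => ⟨hω.1.2, hω.2.2⟩
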